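/- If every 2-connected graph is τ-partitionable, then every graph is τ-partitionable. -/

import Mathlib

open SimpleGraph

/-- The detour order of a graph: the number of vertices in a longest path. -/
noncomputable def detourOrder {V : Type*} (G : SimpleGraph V) : ℕ :=
  sSup {n | ∃ (u v : V) (p : G.Walk u v), p.IsPath ∧ n = p.length + 1}

/-- A graph is 2-connected if it is connected, has at least 3 vertices, and
remains connected after deletion of any single vertex. -/
def TwoConnected {V : Type*} [Fintype V] (G : SimpleGraph V) : Prop :=
  G.Connected ∧ 3 ≤ Fintype.card V ∧
    ∀ v : V, (SimpleGraph.induce {w : V | w ≠ v} G).Connected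

/-- A graph `G` is τ-partitionable if for every pair `(a, b)` of positive
integers with `a + b = τ(G)` there is a partition `(A, B)` of the vertex set
such that the subgraph induced by `A` has detour order at most `a` and the
subgraph induced by `B` has detour order at most `b`. -/
def TauPartitionable {V : Type*} [Fintype V] [DecidableEq V]
    (G : SimpleGraph V) : Prop :=
  ∀ a b : ℕ, 0 < a → 0 < b → a + b = detourOrder G →
    ∃ A B : Finset V, Disjoint A B ∧ A ∪ B = Finset.univ ∧
      detourOrder (SimpleGraph.induce (A : Set V) G) ≤ a ∧
      detourOrder (SimpleGraph.induce (B : Set V) G) ≤ b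

namespace SimpleGraph

variable {V : Type*} {G : SimpleGraph V} {s t D X Y A B : Finset V} {l p q : List V}
  {v z : V} {a b n : ℕ}

/-- The list `l` is the vertex sequence of a (possibly empty) path of `G` inside `s`. -/
def IsPathIn (G : SimpleGraph V) (s : Finset V) (l : List V) : Prop :=
  l.Nodup ∧ l.IsChain G.Adj ∧ ∀ x ∈ l, x ∈ s

/-- All paths of `G` inside `s` have at most `n` vertices. -/
def PathBounded (G : SimpleGraph V) (s : Finset V) (n : ℕ) : Prop :=
  ∀ l, G.IsPathIn s l → l.length ≤ n

/-- The list `l` is a (possibly empty) path inside `s` starting at a neighbour of `v`. -/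
def IsArm (G : SimpleGraph V) (v : V) (s : Finset V) (l : List V) : Prop :=
  G.IsPathIn s l ∧ ∀ y ∈ l.head?, G.Adj v y

/-- Every bound `a + b` on the paths inside `s` splits along a partition of `s`. -/
def PathPartitionable [DecidableEq V] (G : SimpleGraph V) (s : Finset V) : Prop :=
  ∀ a b, 0 < a → 0 < b → G.PathBounded s (a + b) →
    ∃ A ⊆ s, G.PathBounded A a ∧ G.PathBounded (s \ A) b

/-- No edge of `G` joins `s` to `t`. -/
def NoEdges (G : SimpleGraph V) (s t : Finset V) : Prop :=
  ∀ x ∈ s, ∀ y ∈ t, ¬ G.Adj x y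

theorem NoEdges.symm (h : G.NoEdges s t) : G.NoEdges t s :=
  fun x hx y hy hxy => h y hy x hx hxy.symm

theorem NoEdges.mono (h : G.NoEdges s t) (hA : A ⊆ s) (hB : B ⊆ t) : G.NoEdges A B :=
  fun x hx y hy => h x (hA hx) y (hB hy)

theorem IsPathIn.mono (h : G.IsPathIn s l) (hst : s ⊆ t) : G.IsPathIn t l :=
  ⟨h.1, h.2.1, fun x hx => hst (h.2.2 x hx)⟩

theorem IsPathIn.reverse (h : G.IsPathIn s l) : G.IsPathIn s l.reverse := by
  refine ⟨List.nodup_reverse.2 h.1, List.isChain_reverse.2 ?_, by simpa using h.2.2⟩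
  simpa only [G.adj_comm] using h.2.1

theorem isPathIn_append : G.IsPathIn s (p ++ q) ↔
    G.IsPathIn s p ∧ G.IsPathIn s q ∧ p.Disjoint q ∧
      ∀ x ∈ p.getLast?, ∀ y ∈ q.head?, G.Adj x y := by
  simp only [IsPathIn, List.nodup_append', List.isChain_append, List.mem_append, or_imp,
    forall_and]
  tauto

theorem isPathIn_cons : G.IsPathIn s (v :: l) ↔ v ∈ s ∧ v ∉ l ∧ G.IsArm v s l := by
  simp only [IsPathIn, IsArm, List.nodup_cons, List.isChain_cons, List.mem_cons, or_imp,
    forall_and, forall_eq]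
  tauto

theorem IsArm.mono (h : G.IsArm v s l) (hst : s ⊆ t) : G.IsArm v t l :=
  ⟨h.1.mono hst, h.2⟩

theorem isArm_nil : G.IsArm v s [] := by
  simp [IsArm, IsPathIn]

theorem PathBounded.anti (h : G.PathBounded t n) (hst : s ⊆ t) : G.PathBounded s n :=
  fun l hl => h l (hl.mono hst)

theorem pathBounded_of_card_le (h : s.card ≤ n) : G.PathBounded s n := by
  classical
  intro l hl
  rw [← List.toFinset_card_of_nodup hl.1]
  exact (Finset.card_le_card fun x hx => hl.2.2 x (List.mem_toFinset.1 hx)).trans h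

theorem forall_arm_le_or (v : V) (D X : Finset V) :
    (∀ q, G.IsArm v X q → ∃ q', G.IsArm v D q' ∧ q.length ≤ q'.length) ∨
      ∀ q, G.IsArm v D q → ∃ q', G.IsArm v X q' ∧ q.length ≤ q'.length := by
  by_contra! hcon
  obtain ⟨⟨p, hp, hpD⟩, q, hq, hqX⟩ := hcon
  exact lt_asymm (hpD q hq) (hqX p hp)

/-- The detour order of a graph embedded in `G` bounds the paths of `G` inside its image. -/
theorem detourOrder_le_iff {W : Type*} [Fintype W] {H : SimpleGraph W} (f : H ↪g G)
    (hs : ∀ x, x ∈ s ↔ x ∈ Set.range f) : detourOrder H ≤ n ↔ G.PathBounded s n := by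
  constructor
  · intro h l hl
    rcases eq_or_ne l [] with rfl | hne
    · simp
    obtain ⟨l, rfl⟩ : l ∈ Set.range (List.map f) := by
      rw [Set.range_list_map]
      exact fun x hx => (hs x).1 (hl.2.2 x hx)
    have hne' : l ≠ [] := by simpa using hne
    have hchain : l.IsChain H.Adj := by
      simpa only [List.isChain_map, f.map_adj_iff] using hl.2.1
    have hpath : (Walk.ofSupport l hne' hchain).IsPath := by
      rw [Walk.isPath_def, Walk.support_ofSupport]
      exact hl.1.of_map
    have hbdd : BddAbove {n | ∃ (u v : W) (p : H.Walk u v), p.IsPath ∧ n = p.length + 1} := by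
      refine ⟨Fintype.card W, ?_⟩
      rintro _ ⟨u, v, p, hp, rfl⟩
      exact hp.length_lt
    have := (le_csSup hbdd ⟨_, _, _, hpath, rfl⟩).trans h
    have := List.length_pos_of_ne_nil hne'
    grind [Walk.length_ofSupport]
  · intro h
    refine csSup_le' ?_
    rintro _ ⟨u, v, p, hp, rfl⟩
    have := h (p.support.map f) ⟨hp.support_nodup.map f.injective, ?_, ?_⟩
    · simpa using this
    · simpa only [List.isChain_map, f.map_adj_iff] using p.isChain_adj_support
    · intro x hx
      obtain ⟨w, -, rfl⟩ := List.mem_map.1 hx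
      exact (hs _).2 ⟨w, rfl⟩

theorem mem_range_induce_comp_induce {t : Set V} {u : Set t} {x : V} :
    x ∈ Set.range ((Embedding.induce (G := G) t).comp (Embedding.induce u)) ↔
      ∃ h : x ∈ t, ⟨x, h⟩ ∈ u :=
  ⟨by rintro ⟨w, rfl⟩; exact ⟨w.1.2, w.2⟩, fun ⟨h, hu⟩ => ⟨⟨⟨x, h⟩, hu⟩, rfl⟩⟩

variable [DecidableEq V]

theorem IsPathIn.of_noEdges (h : G.NoEdges s t) (hl : G.IsPathIn (s ∪ t) l) :
    G.IsPathIn s l ∨ G.IsPathIn t l := by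
  induction l with
  | nil => simp [IsPathIn]
  | cons x l ih =>
    obtain ⟨hx, hxl, harm⟩ := isPathIn_cons.1 hl
    simp only [isPathIn_cons, IsArm]
    rcases l with - | ⟨y, l⟩
    · simpa [IsPathIn] using hx
    · have hxy : G.Adj x y := harm.2 y rfl
      rcases ih harm.1 with hs | ht
      · have hy : y ∈ s := hs.2.2 y (by simp)
        have := fun hx => h.symm x hx y hy
        grind
      · have hy : y ∈ t := ht.2.2 y (by simp)
        have := fun hx => h x hx y hy
        grind

theorem PathBounded.union (h : G.NoEdges s t) (hs : G.PathBounded s n)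
    (ht : G.PathBounded t n) : G.PathBounded (s ∪ t) n :=
  fun l hl => (hl.of_noEdges h).elim (hs l) (ht l)

theorem PathPartitionable.union (h : G.NoEdges s t) (hs : G.PathPartitionable s)
    (ht : G.PathPartitionable t) : G.PathPartitionable (s ∪ t) := by
  intro a b ha hb hab
  obtain ⟨A, hA, hAa, hAb⟩ := hs a b ha hb (hab.anti Finset.subset_union_left)
  obtain ⟨B, hB, hBa, hBb⟩ := ht a b ha hb (hab.anti Finset.subset_union_right)
  refine ⟨A ∪ B, Finset.union_subset_union hA hB, hAa.union (h.mono hA hB) hBa,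
    (hAb.union (h.mono Finset.sdiff_subset Finset.sdiff_subset) hBb).anti ?_⟩
  grind

theorem IsPathIn.of_insert (hl : G.IsPathIn (insert v s) l) (hv : v ∉ l) : G.IsPathIn s l :=
  ⟨hl.1, hl.2.1, fun x hx => (Finset.mem_insert.1 (hl.2.2 x hx)).resolve_left
    fun h => hv (h ▸ hx)⟩

theorem IsPathIn.exists_arms (hl : G.IsPathIn (insert v s) l) (hv : v ∈ l) :
    ∃ p q, G.IsArm v s p ∧ G.IsArm v s q ∧ l.length = p.length + q.length + 1 ∧
      ∀ x ∈ l, x = v ∨ x ∈ p ∨ x ∈ q := by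
  obtain ⟨p, q, rfl⟩ := List.append_of_mem hv
  obtain ⟨hp, hvq, hpq, hadj⟩ := isPathIn_append.1 hl
  obtain ⟨-, hq, harm⟩ := isPathIn_cons.1 hvq
  have hvp : v ∉ p := fun h => hpq h (by simp)
  refine ⟨p.reverse, q, ⟨(hp.of_insert hvp).reverse, ?_⟩, ⟨harm.1.of_insert hq, harm.2⟩,
    by simp; ring, ?_⟩
  · simp only [List.head?_reverse, List.head?_cons, Option.mem_def, Option.some.injEq,
      forall_eq'] at hadj ⊢
    exact fun y hy => (hadj y hy).symm
  · simp only [List.mem_append, List.mem_cons, List.mem_reverse]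
    tauto

theorem IsArm.isPathIn_join (hp : G.IsArm v s p) (hq : G.IsArm v t q) (hst : Disjoint s t)
    (hs : v ∉ s) (ht : v ∉ t) : G.IsPathIn (insert v (s ∪ t)) (p.reverse ++ v :: q) := by
  have hvp : v ∉ p := fun h => hs (hp.1.2.2 v h)
  have hvq : v ∉ q := fun h => ht (hq.1.2.2 v h)
  have hsub₁ : s ⊆ insert v (s ∪ t) := by grind
  have hsub₂ : t ⊆ insert v (s ∪ t) := by grind
  refine isPathIn_append.2 ⟨hp.1.reverse.mono hsub₁,
    isPathIn_cons.2 ⟨by simp, hvq, hq.mono hsub₂⟩, ?_, ?_⟩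
  · intro x hx hx'
    rcases List.mem_cons.1 hx' with rfl | hx'
    · exact hvp (List.mem_reverse.1 hx)
    · exact Finset.disjoint_left.1 hst (hp.1.2.2 x (List.mem_reverse.1 hx)) (hq.1.2.2 x hx')
  · simp only [List.getLast?_reverse, List.head?_cons, Option.mem_def, Option.some.injEq,
      forall_eq']
    exact fun x hx => (hp.2 x hx).symm

theorem exists_long_arm (hb : G.PathBounded s b) (hz : ¬ G.PathBounded (insert z s) b) :
    ∃ m, G.IsArm z s m ∧ b ≤ 2 * m.length := by
  simp only [PathBounded, not_forall] at hz
  obtain ⟨l, hl, hlen⟩ := hz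
  have hzl : z ∈ l := by
    by_contra h
    exact hlen (hb l (hl.of_insert h))
  obtain ⟨p, q, hp, hq, h, -⟩ := hl.exists_arms hzl
  rcases le_total p.length q.length with hpq | hpq
  · exact ⟨q, hq, by omega⟩
  · exact ⟨p, hp, by omega⟩

theorem exists_subset_forall_arm_extends (hA : A ⊆ Y) (hb : G.PathBounded (Y \ A) b) :
    ∃ A' ⊆ A, G.PathBounded (Y \ A') b ∧ ∀ v p, G.IsArm v A' p → p ≠ [] →
      ∃ q, G.IsArm v Y q ∧ 2 * p.length + b ≤ 2 * q.length := by
  obtain ⟨A', hA', hmin⟩ :=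
    exists_minimal_le_of_wellFoundedLT (fun A => G.PathBounded (Y \ A) b) A hb
  refine ⟨A', hA', hmin.prop, fun v p hp hne => ?_⟩
  obtain ⟨r, z, rfl⟩ := (List.eq_nil_or_concat' p).resolve_left hne
  have hz : z ∈ A' := hp.1.2.2 z (by simp)
  have hzb : ¬ G.PathBounded (insert z (Y \ A')) b := by
    intro h
    refine hmin.not_prop_of_lt (Finset.erase_ssubset hz) (h.anti ?_)
    grind
  obtain ⟨m, hm, hlen⟩ := exists_long_arm hmin.prop hzb
  refine ⟨(r ++ [z]) ++ m, ⟨isPathIn_append.2 ⟨hp.1.mono (hA'.trans hA),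
    hm.1.mono Finset.sdiff_subset, ?_, by simpa using hm.2⟩, ?_⟩, by simp; omega⟩
  · intro x hx hx'
    exact (Finset.mem_sdiff.1 (hm.1.2.2 x hx')).2 (hp.1.2.2 x hx)
  · rw [List.head?_append_of_ne_nil _ hne]
    exact hp.2

theorem IsArm.of_noEdges (h : G.NoEdges s t) (hl : G.IsArm v (s ∪ t) l) :
    G.IsArm v s l ∨ G.IsArm v t l :=
  (hl.1.of_noEdges h).imp (⟨·, hl.2⟩) (⟨·, hl.2⟩)

theorem exists_partition_insert_union (h : G.NoEdges D X) (hdisj : Disjoint D X) (hvD : v ∉ D)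
    (hvX : v ∉ X)
    (harm : ∀ q, G.IsArm v X q → ∃ q', G.IsArm v D q' ∧ q.length ≤ q'.length)
    (hX : G.PathPartitionable X) (ha : 0 < a) (hb : 0 < b)
    (hab : G.PathBounded (insert v (D ∪ X)) (a + b)) (hA : A ⊆ D)
    (hAa : G.PathBounded (insert v A) a) (hAb : G.PathBounded (D \ A) b) :
    ∃ B ⊆ D ∪ X, G.PathBounded (insert v B) a ∧ G.PathBounded ((D ∪ X) \ B) b := by
  have hjoin : ∀ q q', G.IsArm v X q → G.IsArm v D q' →
      q.length + q'.length + 1 ≤ a + b := by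
    intro q q' hq hq'
    have := hab _ (Finset.union_comm X D ▸ hq.isPathIn_join hq' hdisj.symm hvX hvD)
    simp only [List.length_append, List.length_reverse, List.length_cons] at this
    omega
  obtain ⟨C, hC, hCa, hCb⟩ := hX a b ha hb (hab.anti (by grind))
  obtain ⟨A', hA', hAb', hextD⟩ := exists_subset_forall_arm_extends hA hAb
  obtain ⟨C', hC', hCb', hextX⟩ := exists_subset_forall_arm_extends hC hCb
  have hAC : G.NoEdges A' C' := h.mono (hA'.trans hA) (hC'.trans hC)
  refine ⟨A' ∪ C', by grind, ?_, (hAb'.union (h.mono Finset.sdiff_subset Finset.sdiff_subset)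
    hCb').anti (by grind)⟩
  have hshort : ∀ p r, G.IsArm v C' p → p ≠ [] → G.IsArm v (A' ∪ C') r →
      p.length + r.length + 1 ≤ a := by
    intro p r hp hpne hr
    obtain ⟨q, hq, hpq⟩ := hextX v p hp hpne
    obtain ⟨q', hq', hqq'⟩ := harm q hq
    have h₁ := hjoin q q' hq hq'
    by_cases hrne : r = []
    · simp only [hrne, List.length_nil]
      omega
    rcases hr.of_noEdges hAC with hr | hr
    · obtain ⟨u, hu, hru⟩ := hextD v r hr hrne
      have h₂ := hjoin q u hq hu
      omega
    · obtain ⟨u, hu, hru⟩ := hextX v r hr hrne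
      obtain ⟨u', hu', huu'⟩ := harm u hu
      have h₂ := hjoin u u' hu hu'
      omega
  intro l hl
  by_cases hvl : v ∈ l
  · obtain ⟨p, q, hp, hq, hlen, hmem⟩ := hl.exists_arms hvl
    have hcases : ∀ r, G.IsArm v (A' ∪ C') r → G.IsArm v A' r ∨ G.IsArm v C' r ∧ r ≠ [] := by
      intro r hr
      rcases eq_or_ne r [] with rfl | hne
      · exact .inl isArm_nil
      · exact (hr.of_noEdges hAC).imp_right (⟨·, hne⟩)
    rcases hcases p hp with hp' | ⟨hp', hpne⟩
    · rcases hcases q hq with hq' | ⟨hq', hqne⟩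
      · refine hAa l ⟨hl.1, hl.2.1, fun x hx => ?_⟩
        rcases hmem x hx with rfl | hx | hx
        · exact Finset.mem_insert_self _ _
        · exact Finset.mem_insert_of_mem (hA' (hp'.1.2.2 x hx))
        · exact Finset.mem_insert_of_mem (hA' (hq'.1.2.2 x hx))
      · have := hshort q p hq' hqne hp
        omega
    · have := hshort p q hp' hpne hq
      omega
  · exact (hAa.anti (by grind)).union hAC (hCa.anti hC') l (hl.of_insert hvl)

theorem PathPartitionable.insert_union_of_arms_le (h : G.NoEdges D X) (hdisj : Disjoint D X)
    (hvD : v ∉ D) (hvX : v ∉ X)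
    (harm : ∀ q, G.IsArm v X q → ∃ q', G.IsArm v D q' ∧ q.length ≤ q'.length)
    (hD : G.PathPartitionable (insert v D)) (hX : G.PathPartitionable X) :
    G.PathPartitionable (insert v (D ∪ X)) := by
  intro a b ha hb hab
  obtain ⟨A, hA, hAa, hAb⟩ := hD a b ha hb (hab.anti (by grind))
  by_cases hv : v ∈ A
  · obtain ⟨B, hB, hBa, hBb⟩ := exists_partition_insert_union h hdisj hvD hvX harm hX ha hb hab
      (A := A.erase v) (by grind) (hAa.anti (by grind)) (hAb.anti (by grind))
    exact ⟨insert v B, by grind, hBa, hBb.anti (by grind)⟩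
  · obtain ⟨B, hB, hBa, hBb⟩ := exists_partition_insert_union h hdisj hvD hvX harm hX hb ha
      (add_comm a b ▸ hab) (A := D \ A) (by grind) (hAb.anti (by grind)) (hAa.anti (by grind))
    exact ⟨(D ∪ X) \ B, by grind, hBb, hBa.anti (by grind)⟩

theorem PathPartitionable.insert_union (h : G.NoEdges D X) (hdisj : Disjoint D X)
    (hvD : v ∉ D) (hvX : v ∉ X) (hD : G.PathPartitionable D) (hX : G.PathPartitionable X)
    (hD' : G.PathPartitionable (insert v D)) (hX' : G.PathPartitionable (insert v X)) :
    G.PathPartitionable (insert v (D ∪ X)) := by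
  rcases forall_arm_le_or (G := G) v D X with harm | harm
  · exact .insert_union_of_arms_le h hdisj hvD hvX harm hD' hX
  · rw [Finset.union_comm]
    exact .insert_union_of_arms_le h.symm hdisj.symm hvX hvD harm hX' hD

theorem pathPartitionable_of_card_le_two (hs : s.card ≤ 2) : G.PathPartitionable s := by
  intro a b ha hb _
  obtain ⟨A, hA, hcard⟩ := Finset.exists_subset_card_eq (s := s) (n := min s.card 1) (by simp)
  refine ⟨A, hA, pathBounded_of_card_le (by omega), pathBounded_of_card_le ?_⟩
  rw [Finset.card_sdiff_of_subset hA]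
  omega

theorem exists_noEdges_of_not_connected {W : Type*} [Nonempty W] {H : SimpleGraph W}
    (f : H ↪g G) (hs : ∀ x, x ∈ s ↔ x ∈ Set.range f) (hH : ¬ H.Connected) :
    ∃ D X : Finset V, D.Nonempty ∧ X.Nonempty ∧ Disjoint D X ∧ D ∪ X = s ∧ G.NoEdges D X := by
  classical
  obtain ⟨x, y, hxy⟩ : ∃ x y, ¬ H.Reachable x y := by
    by_contra! hcon
    exact hH ⟨hcon⟩
  refine ⟨{z ∈ s | ∃ w, f w = z ∧ H.Reachable x w}, {z ∈ s | ¬ ∃ w, f w = z ∧ H.Reachable x w},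
    ⟨f x, ?_⟩, ⟨f y, ?_⟩, Finset.disjoint_filter_filter_not _ _ _,
    Finset.filter_union_filter_not_eq _ _, ?_⟩
  · simp [hs]
  · simp [hs, hxy]
  · intro u hu v hv huv
    simp only [Finset.mem_filter, hs] at hu hv
    obtain ⟨-, w, rfl, hw⟩ := hu
    obtain ⟨⟨z, rfl⟩, hz⟩ := hv
    exact hz ⟨z, rfl, hw.trans (f.map_adj_iff.1 huv).reachable⟩

theorem PathPartitionable.of_tauPartitionable (h : TauPartitionable (G.induce (s : Set V))) :
    G.PathPartitionable s := by
  intro a b ha hb hab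
  by_cases hsa : G.PathBounded s a
  · exact ⟨s, subset_rfl, hsa, pathBounded_of_card_le (by simp)⟩
  have hτ : ∀ n, detourOrder (G.induce (s : Set V)) ≤ n ↔ G.PathBounded s n :=
    fun n => detourOrder_le_iff (Embedding.induce _) (by simp [Embedding.induce])
  rw [← hτ] at hsa hab
  obtain ⟨A, B, -, hAB, hA, hB⟩ :=
    h a (detourOrder (G.induce (s : Set V)) - a) ha (by omega) (by omega)
  have hτ' (C : Finset (s : Set V)) (n : ℕ)
      (hC : detourOrder ((G.induce (s : Set V)).induce (C : Set (s : Set V))) ≤ n) :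
      G.PathBounded (C.map (Function.Embedding.subtype _)) n := by
    refine (detourOrder_le_iff ((Embedding.induce _).comp (Embedding.induce _)) ?_).1 hC
    intro x
    rw [mem_range_induce_comp_induce]
    simp
  refine ⟨A.map (Function.Embedding.subtype _), ?_, hτ' A a hA,
    (hτ' B b (hB.trans (by omega))).anti ?_⟩
  · intro x hx
    obtain ⟨y, -, rfl⟩ := Finset.mem_map.1 hx
    exact y.2
  · intro x hx
    obtain ⟨hxs, hxA⟩ := Finset.mem_sdiff.1 hx
    have := Finset.mem_union.1 (hAB ▸ Finset.mem_univ (⟨x, hxs⟩ : (s : Set V)))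
    simp only [Finset.mem_map, Function.Embedding.subtype_apply] at hxA ⊢
    grind

theorem PathPartitionable.tauPartitionable [Fintype V]
    (h : G.PathPartitionable Finset.univ) : TauPartitionable G := by
  intro a b ha hb hab
  have hτ (C : Finset V) (n : ℕ) (hC : G.PathBounded C n) :
      detourOrder (G.induce (C : Set V)) ≤ n :=
    (detourOrder_le_iff (Embedding.induce _) (by simp [Embedding.induce])).2 hC
  obtain ⟨A, -, hA, hB⟩ :=
    h a b ha hb ((detourOrder_le_iff (Embedding.refl (G := G)) (by simp)).1 hab.ge)
  exact ⟨A, Finset.univ \ A, Finset.disjoint_sdiff, by simp, hτ A a hA, hτ _ b hB⟩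

theorem exists_cut_of_not_twoConnected (hs : 3 ≤ s.card)
    (h : ¬ TwoConnected (G.induce (s : Set V))) :
    ∃ D X : Finset V, D.Nonempty ∧ X.Nonempty ∧ Disjoint D X ∧ G.NoEdges D X ∧
      (D ∪ X = s ∨ ∃ v ∉ D ∪ X, insert v (D ∪ X) = s) := by
  by_cases hconn : (G.induce (s : Set V)).Connected
  · obtain ⟨v, hv⟩ : ∃ v, ¬ ((G.induce (s : Set V)).induce {w | w ≠ v}).Connected := by
      by_contra! hcon
      exact h ⟨hconn, by simpa using hs, hcon⟩
    obtain ⟨w, hw⟩ : ∃ w ∈ s, w ≠ (v : V) := Finset.exists_mem_ne (by omega) _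
    have : Nonempty {w : (s : Set V) | w ≠ v} :=
      ⟨⟨⟨w, hw.1⟩, fun h => hw.2 (congrArg Subtype.val h)⟩⟩
    obtain ⟨D, X, hD, hX, hdisj, hDX, hno⟩ := exists_noEdges_of_not_connected
      (s := s.erase (v : V)) ((Embedding.induce _).comp (Embedding.induce _))
      (fun x => by rw [mem_range_induce_comp_induce, Finset.mem_erase]; grind) hv
    exact ⟨D, X, hD, hX, hdisj, hno, .inr ⟨v, by simp [hDX],
      by rw [hDX]; exact Finset.insert_erase v.2⟩⟩
  · obtain ⟨w, hw⟩ : s.Nonempty := Finset.card_pos.1 (by omega)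
    have : Nonempty (s : Set V) := ⟨⟨w, hw⟩⟩
    obtain ⟨D, X, hD, hX, hdisj, hDX, hno⟩ := exists_noEdges_of_not_connected (s := s)
      (Embedding.induce _) (by simp [Embedding.induce]) hconn
    exact ⟨D, X, hD, hX, hdisj, hno, .inl hDX⟩

theorem pathPartitionable_of_forall_twoConnected
    (h : ∀ s : Finset V, TwoConnected (G.induce (s : Set V)) → G.PathPartitionable s)
    (s : Finset V) : G.PathPartitionable s := by
  induction s using Finset.strongInduction with
  | H s ih =>
    rcases le_or_gt s.card 2 with hs | hs
    · exact pathPartitionable_of_card_le_two hs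
    by_cases h2 : TwoConnected (G.induce (s : Set V))
    · exact h s h2
    obtain ⟨D, X, ⟨x, hx⟩, ⟨y, hy⟩, hdisj, hno, hDX⟩ := exists_cut_of_not_twoConnected hs h2
    have hyD : y ∉ D := Finset.disjoint_right.1 hdisj hy
    have hxX : x ∉ X := Finset.disjoint_left.1 hdisj hx
    rcases hDX with rfl | ⟨v, hv, rfl⟩
    · exact .union hno (ih D (by grind)) (ih X (by grind))
    · exact .insert_union hno hdisj (by grind) (by grind) (ih D (by grind)) (ih X (by grind))
        (ih (insert v D) ((Finset.ssubset_iff_of_subset (by grind)).2 ⟨y, by grind, by grind⟩))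
        (ih (insert v X) ((Finset.ssubset_iff_of_subset (by grind)).2 ⟨x, by grind, by grind⟩))

end SimpleGraph

/-- If every 2-connected graph is τ-partitionable, then every graph is
τ-partitionable. -/
theorem tauPartitionable_of_twoConnected_tauPartitionable
    (h : ∀ (V : Type) [Fintype V] [DecidableEq V] (G : SimpleGraph V),
      TwoConnected G → TauPartitionable G) :
    ∀ (V : Type) [Fintype V] [DecidableEq V] (G : SimpleGraph V),
      TauPartitionable G := by
  intro V _ _ G
  exact (pathPartitionable_of_forall_twoConnected
    (fun s hs => .of_tauPartitionable (h _ _ hs)) Finset.univ).tauPartitionable
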